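/- Let H be a complex Hilbert space and let 𝒳 be a family of finite-dimensional subspaces of H such that any two members of 𝒳 are compatible. Then there exists an orthonormal basis B of H such that every member of 𝒳 is the closed linear span of a subset of B; that is, 𝒳 is contained in the orthogonal apartment associated to B. -/

import Mathlib

/-!
Say that `M` reduces `Y` if orthogonal projection onto `Y` maps `M` into itself. Compatible
finite-dimensional subspaces reduce each other, and this property passes to intersections and to
the orthogonal complement of any set of vectors each lying in `Y` or in `Yᗮ`.

By Zorn's lemma there is a maximal orthonormal set `s` such that for every `v ∈ s` and `X ∈ 𝒳`,
either `v ∈ X` or `v ∈ Xᗮ` (vectors *adapted* to `𝒳`). Its orthogonal complement `W` reduces every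
member of `𝒳`, so if `W ≠ ⊥` then `W` contains a nonzero adapted vector, contradicting maximality:

* if every `W ⊓ X` is trivial, then `W` is orthogonal to every `X ∈ 𝒳`, and any vector will do;
* otherwise some `W ⊓ X` is a nonzero finite-dimensional subspace reducing `𝒳`. A nonzero `M ≤ W`
  of minimal dimension with this property satisfies, for each `X`, either `M ⊓ X = M`, so `M ≤ X`,
  or `M ⊓ X = ⊥`, so `M ≤ Xᗮ`; hence all its vectors are adapted.

So `s` is a Hilbert basis, and a vector of `X` orthogonal to `s ∩ X` is orthogonal to all of `s`,
whence `s ∩ X` spans `X`.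
-/

open scoped InnerProductSpace

/-- Two subspaces `X`, `Y` are compatible if `(X ⊓ Y)ᗮ ⊓ X` and `(X ⊓ Y)ᗮ ⊓ Y`
are orthogonal. -/
def Compatible {H : Type*} [NormedAddCommGroup H] [InnerProductSpace ℂ H]
    (X Y : Submodule ℂ H) : Prop :=
  (X ⊓ Y)ᗮ ⊓ X ≤ ((X ⊓ Y)ᗮ ⊓ Y)ᗮ

section

variable {H : Type*} [NormedAddCommGroup H] [InnerProductSpace ℂ H]

/-- `M` reduces `Y` if the orthogonal projection onto `Y` of each vector of `M` exists and lies
in `M`. The projection is given by its defining property, so that no instance providing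
orthogonal projections onto `Y` is needed. -/
def Reduces (M Y : Submodule ℂ H) : Prop :=
  ∀ x ∈ M, ∃ y ∈ M, y ∈ Y ∧ x - y ∈ Yᗮ

/-- A vector is adapted to a family of subspaces if it lies in, or is orthogonal to, each of
them. -/
def Adapted (𝒳 : Set (Submodule ℂ H)) (v : H) : Prop :=
  ∀ X ∈ 𝒳, v ∈ X ∨ v ∈ Xᗮ

/-- The projection of `x ∈ X` onto `Y` is its projection onto `X ⊓ Y`. -/
lemma Compatible.reduces {X Y : Submodule ℂ H} [FiniteDimensional ℂ X] (h : Compatible X Y) :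
    Reduces X Y := by
  intro x hx
  have : FiniteDimensional ℂ (X ⊓ Y : Submodule ℂ H) :=
    Submodule.finiteDimensional_of_le inf_le_left
  have decomp : ∀ z : H, ∃ a ∈ X ⊓ Y, z - a ∈ (X ⊓ Y)ᗮ := fun z =>
    ⟨_, (X ⊓ Y).starProjection_apply_mem z, (X ⊓ Y).sub_starProjection_mem_orthogonal z⟩
  obtain ⟨a, ha, hb⟩ := decomp x
  refine ⟨a, ha.1, ha.2, ?_⟩
  rw [Submodule.mem_orthogonal]
  intro z hz
  obtain ⟨c, hc, hd⟩ := decomp z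
  have h1 : ⟪c, x - a⟫_ℂ = 0 := (Submodule.mem_orthogonal _ _).1 hb c hc
  have h2 : ⟪z - c, x - a⟫_ℂ = 0 :=
    (Submodule.mem_orthogonal _ _).1 (h ⟨hb, X.sub_mem hx ha.1⟩) (z - c)
      ⟨hd, Y.sub_mem hz hc.2⟩
  rw [← sub_add_cancel z c, inner_add_left, h1, h2, add_zero]

lemma Reduces.inf {M N Y : Submodule ℂ H} (hM : Reduces M Y) (hN : Reduces N Y) :
    Reduces (M ⊓ N) Y := by
  rintro x ⟨hxM, hxN⟩
  obtain ⟨y, hyM, hyY, hy⟩ := hM x hxM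
  obtain ⟨z, hzN, hzY, hz⟩ := hN x hxN
  have hyz : y - z = 0 := by
    have h1 : y - z ∈ Yᗮ := by
      have := Yᗮ.sub_mem hz hy
      rwa [sub_sub_sub_cancel_left] at this
    exact inner_self_eq_zero.1 ((Submodule.mem_orthogonal _ _).1 h1 _ (Y.sub_mem hyY hzY))
  exact ⟨y, ⟨hyM, sub_eq_zero.1 hyz ▸ hzN⟩, hyY, hy⟩

lemma reduces_span_orthogonal {s : Set H} {Y : Submodule ℂ H} [FiniteDimensional ℂ Y]
    (hs : ∀ v ∈ s, v ∈ Y ∨ v ∈ Yᗮ) : Reduces (Submodule.span ℂ s)ᗮ Y := by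
  intro x hx
  have hy := Y.sub_starProjection_mem_orthogonal x
  have hyY := Y.starProjection_apply_mem x
  refine ⟨Y.starProjection x, ?_, hyY, hy⟩
  set y := Y.starProjection x
  suffices Submodule.span ℂ s ≤ (Submodule.span ℂ {y})ᗮ from
    fun z hz => Submodule.mem_orthogonal_singleton_iff_inner_left.1 (this hz)
  rw [Submodule.span_le]
  intro v hv
  refine Submodule.mem_orthogonal_singleton_iff_inner_left.2 ?_
  rcases hs v hv with h | h
  · have h1 := (Submodule.mem_orthogonal _ _).1 hy v h
    rw [inner_sub_right, (Submodule.mem_orthogonal _ _).1 hx v (Submodule.subset_span hv)] at h1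
    simpa using h1
  · exact (Submodule.mem_orthogonal' _ _).1 h y hyY

lemma Reduces.le_orthogonal {M Y : Submodule ℂ H} (h : Reduces M Y) (h0 : M ⊓ Y = ⊥) :
    M ≤ Yᗮ := by
  intro x hx
  obtain ⟨y, hyM, hyY, hy⟩ := h x hx
  have : y ∈ M ⊓ Y := ⟨hyM, hyY⟩
  rw [h0, Submodule.mem_bot] at this
  simpa [this] using hy

/-- Simultaneous diagonalization in finite dimension, by minimality of the dimension. -/
lemma exists_adapted_of_finiteDimensional {𝒳 : Set (Submodule ℂ H)}
    (hX : ∀ X ∈ 𝒳, ∀ Y ∈ 𝒳, Reduces X Y) (M : Submodule ℂ H) [FiniteDimensional ℂ M]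
    (hM : ∀ Y ∈ 𝒳, Reduces M Y) (h0 : M ≠ ⊥) : ∃ u ∈ M, u ≠ 0 ∧ Adapted 𝒳 u := by
  induction hn : Module.finrank ℂ M using Nat.strong_induction_on generalizing M with
  | _ n ih =>
    by_cases h : ∃ X ∈ 𝒳, M ⊓ X ≠ ⊥ ∧ ¬ M ≤ X
    · obtain ⟨X, hXm, hne, hle⟩ := h
      have hlt : M ⊓ X < M := inf_lt_left.2 hle
      have : FiniteDimensional ℂ (M ⊓ X : Submodule ℂ H) :=
        Submodule.finiteDimensional_of_le inf_le_left
      obtain ⟨u, hu, h⟩ := ih _ (hn ▸ Submodule.finrank_lt_finrank_of_lt hlt) (M ⊓ X)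
        (fun Y hY => (hM Y hY).inf (hX X hXm Y hY)) hne rfl
      exact ⟨u, hu.1, h⟩
    · push Not at h
      obtain ⟨u, hu, hu0⟩ := M.ne_bot_iff.1 h0
      refine ⟨u, hu, hu0, fun X hXm => ?_⟩
      by_cases hb : M ⊓ X = ⊥
      · exact .inr ((hM X hXm).le_orthogonal hb hu)
      · exact .inl (h X hXm hb hu)

lemma exists_adapted {𝒳 : Set (Submodule ℂ H)} (hfd : ∀ X ∈ 𝒳, FiniteDimensional ℂ X)
    (hX : ∀ X ∈ 𝒳, ∀ Y ∈ 𝒳, Reduces X Y) (W : Submodule ℂ H)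
    (hW : ∀ Y ∈ 𝒳, Reduces W Y) (h0 : W ≠ ⊥) : ∃ u ∈ W, u ≠ 0 ∧ Adapted 𝒳 u := by
  by_cases h : ∃ X ∈ 𝒳, W ⊓ X ≠ ⊥
  · obtain ⟨X, hXm, hne⟩ := h
    have := hfd X hXm
    have : FiniteDimensional ℂ (W ⊓ X : Submodule ℂ H) :=
      Submodule.finiteDimensional_of_le inf_le_right
    obtain ⟨u, hu, h⟩ := exists_adapted_of_finiteDimensional hX (W ⊓ X)
      (fun Y hY => (hW Y hY).inf (hX X hXm Y hY)) hne
    exact ⟨u, hu.1, h⟩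
  · push Not at h
    obtain ⟨u, hu, hu0⟩ := W.ne_bot_iff.1 h0
    exact ⟨u, hu, hu0, fun X hXm => .inr ((hW X hXm).le_orthogonal (h X hXm) hu)⟩

lemma orthonormal_insert {s : Set H} (hs : Orthonormal ℂ ((↑) : s → H)) {e : H}
    (he : ‖e‖ = 1) (hes : e ∈ (Submodule.span ℂ s)ᗮ) :
    Orthonormal ℂ ((↑) : ↥(insert e s) → H) := by
  have h : ∀ v ∈ s, ⟪v, e⟫_ℂ = 0 := fun v hv =>
    (Submodule.mem_orthogonal _ _).1 hes v (Submodule.subset_span hv)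
  refine ⟨?_, ?_⟩
  · rintro ⟨v, rfl | hv⟩
    · exact he
    · exact hs.1 ⟨v, hv⟩
  · rintro ⟨v, hv⟩ ⟨w, hw⟩ hvw
    have hne : v ≠ w := fun h => hvw (Subtype.ext h)
    rcases hv with rfl | hv <;> rcases hw with rfl | hw
    · exact absurd rfl hne
    · exact inner_eq_zero_symm.1 (h w hw)
    · exact h v hv
    · exact hs.2 (i := ⟨v, hv⟩) (j := ⟨w, hw⟩) (fun h => hne (congrArg Subtype.val h))

lemma exists_maximal_adapted (𝒳 : Set (Submodule ℂ H)) :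
    ∃ s : Set H, Maximal
      (fun s : Set H => Orthonormal ℂ ((↑) : s → H) ∧ ∀ v ∈ s, Adapted 𝒳 v) s := by
  refine zorn_subset {s : Set H | Orthonormal ℂ ((↑) : s → H) ∧ ∀ v ∈ s, Adapted 𝒳 v} ?_
  intro c hc hchain
  refine ⟨⋃₀ c, ⟨orthonormal_sUnion_of_directed hchain.directedOn fun a ha => (hc ha).1, ?_⟩,
    fun a ha => Set.subset_sUnion_of_mem ha⟩
  rintro v ⟨a, ha, hv⟩
  exact (hc ha).2 v hv

/-- The vectors of an adapted orthogonally total set lying in `X` span `X`. -/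
lemma span_inter_eq {s : Set H} (hs : (Submodule.span ℂ s)ᗮ = ⊥) {X : Submodule ℂ H}
    [FiniteDimensional ℂ X] (hX : ∀ v ∈ s, v ∈ X ∨ v ∈ Xᗮ) :
    Submodule.span ℂ (s ∩ X) = X := by
  have hle : Submodule.span ℂ (s ∩ X) ≤ X := Submodule.span_le.2 Set.inter_subset_right
  have : FiniteDimensional ℂ (Submodule.span ℂ (s ∩ X)) :=
    Submodule.finiteDimensional_of_le hle
  refine le_antisymm hle fun x hx => ?_
  set K := Submodule.span ℂ (s ∩ X)
  have hy := K.sub_starProjection_mem_orthogonal x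
  have hyK := K.starProjection_apply_mem x
  set y := K.starProjection x
  have hyX : x - y ∈ X := X.sub_mem hx (hle hyK)
  have h0 : x - y ∈ (Submodule.span ℂ s)ᗮ := by
    suffices Submodule.span ℂ s ≤ (Submodule.span ℂ {x - y})ᗮ from
      fun z hz => Submodule.mem_orthogonal_singleton_iff_inner_left.1 (this hz)
    rw [Submodule.span_le]
    intro v hv
    refine Submodule.mem_orthogonal_singleton_iff_inner_left.2 ?_
    rcases hX v hv with h | h
    · exact (Submodule.mem_orthogonal _ _).1 hy v (Submodule.subset_span ⟨hv, h⟩)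
    · exact (Submodule.mem_orthogonal' _ _).1 h _ hyX
  rw [hs, Submodule.mem_bot, sub_eq_zero] at h0
  exact h0 ▸ hyK

end

/-- **Proposition 2.** Every compatible family of finite-dimensional subspaces of a
complex Hilbert space is contained in the orthogonal apartment associated to some
orthonormal basis: there is an orthonormal basis such that every member of the family
is the closed linear span of a subset of the basis. -/
theorem compatible_family_subset_orthogonal_apartment
    {H : Type*} [NormedAddCommGroup H] [InnerProductSpace ℂ H] [CompleteSpace H]
    (𝒳 : Set (Submodule ℂ H))
    (hfd : ∀ X ∈ 𝒳, FiniteDimensional ℂ X)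
    (hcomp : ∀ X ∈ 𝒳, ∀ Y ∈ 𝒳, Compatible X Y) :
    ∃ (s : Set H) (b : HilbertBasis s ℂ H), (∀ i : s, b i = (i : H)) ∧
      ∀ X ∈ 𝒳, ∃ t ⊆ s, X = (Submodule.span ℂ t).topologicalClosure := by
  have hred : ∀ X ∈ 𝒳, ∀ Y ∈ 𝒳, Reduces X Y := fun X hX Y hY =>
    have := hfd X hX
    (hcomp X hX Y hY).reduces
  obtain ⟨s, ⟨hs, hadapt⟩, hmax⟩ := exists_maximal_adapted 𝒳
  have hbot : (Submodule.span ℂ s)ᗮ = ⊥ := by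
    by_contra hne
    obtain ⟨u, hu, hu0, hua⟩ := exists_adapted hfd hred (Submodule.span ℂ s)ᗮ
      (fun Y hY =>
        have := hfd Y hY
        reduces_span_orthogonal fun v hv => hadapt v hv Y hY) hne
    set e : H := ((‖u‖ : ℂ)⁻¹) • u with he
    have he1 : ‖e‖ = 1 := norm_smul_inv_norm hu0
    have hes : e ∈ (Submodule.span ℂ s)ᗮ := Submodule.smul_mem _ _ hu
    have hea : Adapted 𝒳 e := fun X hX =>
      (hua X hX).imp (fun h => X.smul_mem _ h) (fun h => Xᗮ.smul_mem _ h)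
    have hmem : e ∈ s := hmax ⟨orthonormal_insert hs he1 hes, by
      rintro v (rfl | hv)
      exacts [hea, hadapt v hv]⟩ (Set.subset_insert e s) (Set.mem_insert e s)
    have : e = 0 := inner_self_eq_zero.1
      ((Submodule.mem_orthogonal _ _).1 hes e (Submodule.subset_span hmem))
    simp [this] at he1
  refine ⟨s, HilbertBasis.mkOfOrthogonalEqBot hs (by simpa using hbot), fun i => by simp,
    fun X hX => ⟨s ∩ X, Set.inter_subset_left, ?_⟩⟩
  have := hfd X hX
  rw [span_inter_eq hbot fun v hv => hadapt v hv X hX]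
  exact X.closed_of_finiteDimensional.submodule_topologicalClosure_eq.symm
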